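/- Let H_n be the physicists' Hermite polynomials, D = {d_1 < … < d_M} a finite set of positive integers, N ∈ ℕ with N ∉ D, Ξ_D = W[H_{d_1},…,H_{d_M}], P_{D,n} = W[H_{d_1},…,H_{d_M},H_n], Ñ = (∑_j d_j) − M(M+1)/2 + N. Assume P_{D,N} has degree Ñ and let η : Fin Ñ → ℂ be injective with P_{D,N}(η_l) = 0 and Ξ_D(η_l) ≠ 0 for every l. For j ∈ {1,…,M} and ε ∈ {0,…,d_j−1} \ D, let P_{D′(j,ε),N} = W[H_{d_1},…,H_{d_{j−1}},H_ε,H_{d_{j+1}},…,H_{d_M},H_N] be the extra lower degree polynomial obtained by replacing the j-th entry d_j by ε. Then: (a) for every m ∈ {0,…,N−1} \ D with m ≠ d_j + ε − N, ∑_{l=1}^{Ñ} P_{D,m}(η_l) · P_{D′(j,ε),N}(η_l) / ((P_{D,N})′(η_l))² = 0; and (b) for two such replacements (j,ε) and (j′,ε′) with d_j + ε ≠ d_{j′} + ε′, ∑_{l=1}^{Ñ} P_{D′(j,ε),N}(η_l) · P_{D′(j′,ε′),N}(η_l) / ((P_{D,N})′(η_l))² = 0. -/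

import Mathlib

/-!
Put `S = D ∪ {N}` and let `P = P_{D,N}` be, up to sign, the Wronskian of the Hermite polynomials
indexed by `S`. Every polynomial paired in the two sums is, up to sign, the Wronskian `Q` obtained
from `P` by replacing some `s ∈ S` by some `t < s` outside `S`: `s = N`, `t = m` for the ordinary
ones and `s = d j`, `t = ε` for the extra ones (if `ε = N` the polynomial vanishes). The summands
are products of residues of two quotients `Q/P` at the simple zeros `η l` of `P`.

By Jacobi's identity for Wronskians (`wronskian_jacobi`), `(Q/P)' = f g / P²`, where `g` is the
Wronskian with `s` removed from `S` and `f` the one with `t` added. Up to factors `exp(±x²/2)`,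
`f/P` and `g/P` are eigenfunctions of the Schrödinger operator with potential `V = x² - 2 (log P)''`
with eigenvalues `2t` and `2s` up to a common shift. This is Crum's theorem, proved by iterated
Darboux steps in bilinear polynomial form (`Hirota.darboux`, `KAHermite_props`); the same induction
gives the degrees of all Wronskians.

Near a simple zero of `P`, with local coordinate `y`, one has `V = 2/y² + c + O(y)`, so an
eigenfunction for the eigenvalue `E` has the form `α (1/y + (E - c) y / 2 + …)`. Hence `(Q/P)'` is
`-r (1/y² + (s + t) - c + …)` up to the shift, `r` being the residue of `Q/P`: only `s + t` matters
(`Replacement.at_zero`). Since `deg Q < deg P`, also `Q/P = ∑ r_k / (x - η k)`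
(`partial_fractions`). Comparing constant terms at `η l` shows that the residues form an
eigenvector, with eigenvalue `s + t` up to a shift, of the symmetric matrix with off-diagonal
entries `1/(η l - η k)²` and a diagonal depending only on `P` (`Replacement.eigen`). Eigenvectors
of a symmetric matrix for distinct eigenvalues are orthogonal (`Replacement.orthogonal`).
-/

open Polynomial

/-- The physicists' Hermite polynomials: `H_0 = 1`, `H_{n+1} = 2·X·H_n − H_n′`. -/
noncomputable def hermiteP : ℕ → Polynomial ℝ
  | 0 => 1
  | n + 1 => 2 * Polynomial.X * hermiteP n - Polynomial.derivative (hermiteP n)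

/-- The Wronskian `W[f_1,…,f_m]`: determinant of the matrix whose `(i,j)` entry is the
`i`-th derivative of `f j` (indices starting from `0`). -/
noncomputable def wronskian {m : ℕ} (f : Fin m → Polynomial ℝ) : Polynomial ℝ :=
  (Matrix.of fun i j : Fin m => Polynomial.derivative^[(i : ℕ)] (f j)).det

/-- The Krein–Adler polynomial `P_{D,n} = W[H_{d_1},…,H_{d_M},H_n]` based on the
physicists' Hermite polynomials. -/
noncomputable def KAHermite {M : ℕ} (d : Fin M → ℕ) (n : ℕ) : Polynomial ℝ :=
  wronskian (Fin.snoc (fun j => hermiteP (d j)) (hermiteP n))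

/-- The denominator polynomial `Ξ_D = W[H_{d_1},…,H_{d_M}]`. -/
noncomputable def XiHermite {M : ℕ} (d : Fin M → ℕ) : Polynomial ℝ :=
  wronskian (fun j => hermiteP (d j))


/-! ### Wronskian identities -/

/-- The determinant of `A` bordered by one column `b`, one row `c` and the corner `x`. -/
def borderedDet {R n : Type*} [CommRing R] [Fintype n] [DecidableEq n]
    (A : Matrix n n R) (b c : n → R) (x : R) : R :=
  (Matrix.fromBlocks A (Matrix.of fun k (_ : Unit) => b k) (Matrix.of fun (_ : Unit) k => c k)
    (Matrix.of fun (_ _ : Unit) => x)).det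

lemma borderedDet_eq {F n : Type*} [Field F] [Fintype n] [DecidableEq n]
    (A : Matrix n n F) [Invertible A] (b c : n → F) (x : F) :
    borderedDet A b c x = A.det * (x - ∑ k, ∑ l, c l * (⅟A) l k * b k) := by
  rw [borderedDet, Matrix.det_fromBlocks₁₁]
  simp [Matrix.mul_apply, Finset.sum_mul]

/-- The **Desnanot–Jacobi identity** for a matrix bordered by two rows and columns, in the case
of an invertible core, where it is a computation with Schur complements. -/
lemma jacobi_field {F n : Type*} [Field F] [Fintype n] [DecidableEq n]
    (A : Matrix n n F) (hA : A.det ≠ 0) (b c : Fin 2 → n → F) (D : Matrix (Fin 2) (Fin 2) F) :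
    (Matrix.fromBlocks A (Matrix.of fun k j => b j k) (Matrix.of fun i k => c i k) D).det * A.det =
      borderedDet A (b 0) (c 0) (D 0 0) * borderedDet A (b 1) (c 1) (D 1 1)
        - borderedDet A (b 1) (c 0) (D 0 1) * borderedDet A (b 0) (c 1) (D 1 0) := by
  have : Invertible A := Matrix.invertibleOfIsUnitDet A (isUnit_iff_ne_zero.mpr hA)
  simp only [borderedDet_eq]
  rw [Matrix.det_fromBlocks₁₁, Matrix.det_fin_two]
  simp only [Matrix.sub_apply, Matrix.mul_apply, Matrix.of_apply, Finset.sum_mul]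
  ring

lemma map_borderedDet {R S n : Type*} [CommRing R] [CommRing S] [Fintype n] [DecidableEq n]
    (φ : R →+* S) (A : Matrix n n R) (b c : n → R) (x : R) :
    φ (borderedDet A b c x) =
      borderedDet (A.map φ) (fun k => φ (b k)) (fun k => φ (c k)) (φ x) := by
  rw [borderedDet, borderedDet, RingHom.map_det, RingHom.mapMatrix_apply, Matrix.fromBlocks_map]
  rfl

lemma jacobi_domain {R n : Type*} [CommRing R] [IsDomain R] [Fintype n] [DecidableEq n]
    (A : Matrix n n R) (hA : A.det ≠ 0) (b c : Fin 2 → n → R) (D : Matrix (Fin 2) (Fin 2) R) :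
    (Matrix.fromBlocks A (Matrix.of fun k j => b j k) (Matrix.of fun i k => c i k) D).det * A.det =
      borderedDet A (b 0) (c 0) (D 0 0) * borderedDet A (b 1) (c 1) (D 1 1)
        - borderedDet A (b 1) (c 0) (D 0 1) * borderedDet A (b 0) (c 1) (D 1 0) := by
  let φ := algebraMap R (FractionRing R)
  have hφ : Function.Injective φ := IsFractionRing.injective R (FractionRing R)
  have hA' : (A.map φ).det ≠ 0 := by
    have := RingHom.map_det φ A
    rw [RingHom.mapMatrix_apply] at this
    rw [← this]
    exact fun h => hA (hφ (by rw [h, map_zero]))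
  apply hφ
  simp only [map_mul, map_sub, map_borderedDet, RingHom.map_det, RingHom.mapMatrix_apply,
    Matrix.fromBlocks_map]
  exact jacobi_field (A.map φ) hA' (fun j k => φ (b j k)) (fun i k => φ (c i k)) (D.map φ)

/-- The matrix of derivatives whose determinant is the Wronskian. -/
noncomputable def wronskianMatrix {m : ℕ} (f : Fin m → ℝ[X]) : Matrix (Fin m) (Fin m) ℝ[X] :=
  Matrix.of fun i j => derivative^[(i : ℕ)] (f j)

lemma wronskian_snoc {K : ℕ} (a : Fin K → ℝ[X]) (h : ℝ[X]) :
    _root_.wronskian (Fin.snoc a h : Fin (K + 1) → ℝ[X]) =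
      borderedDet (wronskianMatrix a) (fun k => derivative^[(k : ℕ)] h)
        (fun k => derivative^[K] (a k)) (derivative^[K] h) := by
  let e : Fin K ⊕ Unit ≃ Fin (K + 1) :=
    (Equiv.sumCongr (Equiv.refl _) (Equiv.ofUnique Unit (Fin 1))).trans finSumFinEquiv
  have e1 : ∀ k : Fin K, e (Sum.inl k) = Fin.castSucc k := fun k => rfl
  have e2 : ∀ u, e (Sum.inr u) = Fin.last K := fun u => rfl
  rw [_root_.wronskian, ← Matrix.det_submatrix_equiv_self e, borderedDet]
  congr 1
  ext i j
  rcases i with i | i <;> rcases j with j | j <;>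
    simp [e1, e2, wronskianMatrix]

/-- The Leibniz rule: the derivative of a determinant is the sum over the rows of the
determinants with that row differentiated. -/
lemma derivative_det_rows {n : ℕ} (A : Matrix (Fin n) (Fin n) ℝ[X]) :
    derivative A.det = ∑ i, (A.updateRow i (fun j => derivative (A i j))).det := by
  simp only [← Matrix.det_transpose A, ← Matrix.det_transpose (A.updateRow _ _)]
  simp only [Matrix.det_apply', derivative_sum]
  rw [Finset.sum_comm]
  refine Finset.sum_congr rfl fun σ _ => ?_
  rw [← Finset.mul_sum, derivative_mul, derivative_intCast, zero_mul, zero_add,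
    derivative_prod_finset]
  congr 1
  refine Finset.sum_congr rfl fun i _ => ?_
  rw [← Finset.mul_prod_erase Finset.univ _ (Finset.mem_univ i), mul_comm]
  congr 1
  · simp
  · refine Finset.prod_congr rfl fun k hk => ?_
    simp [Matrix.updateRow_ne (Finset.ne_of_mem_erase hk)]

lemma derivative_wronskian_snoc {K : ℕ} (a : Fin K → ℝ[X]) (h : ℝ[X]) :
    derivative (_root_.wronskian (Fin.snoc a h : Fin (K + 1) → ℝ[X])) =
      borderedDet (wronskianMatrix a) (fun k => derivative^[(k : ℕ)] h)
        (fun k => derivative^[K + 1] (a k)) (derivative^[K + 1] h) := by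
  rw [_root_.wronskian, derivative_det_rows, Fin.sum_univ_castSucc, Finset.sum_eq_zero, zero_add]
  · let e : Fin K ⊕ Unit ≃ Fin (K + 1) :=
      (Equiv.sumCongr (Equiv.refl _) (Equiv.ofUnique Unit (Fin 1))).trans finSumFinEquiv
    have e1 : ∀ k : Fin K, e (Sum.inl k) = Fin.castSucc k := fun k => rfl
    have e2 : ∀ u, e (Sum.inr u) = Fin.last K := fun u => rfl
    rw [← Matrix.det_submatrix_equiv_self e, borderedDet]
    congr 1
    ext i j
    rcases i with i | i <;> rcases j with j | j <;>
      simp [e1, e2, wronskianMatrix, Matrix.updateRow_apply, Function.iterate_succ_apply',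
        (Fin.castSucc_lt_last _).ne]
  · -- differentiating any row but the last reproduces the next row
    intro i _
    refine Matrix.det_zero_of_row_eq (i := i.castSucc) (j := i.succ) (Fin.castSucc_lt_succ).ne ?_
    ext1 j
    rw [Matrix.updateRow_self, Matrix.updateRow_ne (Fin.castSucc_lt_succ).ne']
    simp [Function.iterate_succ_apply']

lemma wronskian_snoc_snoc {K : ℕ} (a : Fin K → ℝ[X]) (h₁ h₂ : ℝ[X]) :
    _root_.wronskian (Fin.snoc (Fin.snoc a h₁ : Fin (K + 1) → ℝ[X]) h₂ : Fin (K + 2) → ℝ[X]) =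
      (Matrix.fromBlocks (wronskianMatrix a)
        (Matrix.of fun k j => (fun j (k : Fin K) => derivative^[(k : ℕ)] (![h₁, h₂] j)) j k)
        (Matrix.of fun i k => (fun (i : Fin 2) k => derivative^[K + i] (a k)) i k)
        (Matrix.of fun i j : Fin 2 => derivative^[K + i] (![h₁, h₂] j))).det := by
  have e1 : ∀ k : Fin K, (finSumFinEquiv (Sum.inl k) : Fin (K + 2)) =
    Fin.castSucc (Fin.castSucc k) := fun k => rfl
  have e2 : (finSumFinEquiv (Sum.inr 0) : Fin (K + 2)) = Fin.castSucc (Fin.last K) := rfl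
  have e3 : (finSumFinEquiv (Sum.inr 1) : Fin (K + 2)) = Fin.last (K + 1) := rfl
  rw [_root_.wronskian, ← Matrix.det_submatrix_equiv_self
    (finSumFinEquiv : Fin K ⊕ Fin 2 ≃ Fin (K + 2))]
  congr 1
  ext1 i j
  rcases i with i | i <;> rcases j with j | j <;> (try fin_cases i) <;> (try fin_cases j) <;>
    simp [e1, e2, e3, wronskianMatrix, -finSumFinEquiv_apply_left, -finSumFinEquiv_apply_right]

/-- Jacobi's identity for Wronskians: `W[a,h₁,h₂] W[a] = W(W[a,h₁], W[a,h₂])`. -/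
lemma wronskian_jacobi {K : ℕ} (a : Fin K → ℝ[X]) (ha : _root_.wronskian a ≠ 0) (h₁ h₂ : ℝ[X]) :
    _root_.wronskian (Fin.snoc (Fin.snoc a h₁ : Fin (K + 1) → ℝ[X]) h₂ : Fin (K + 2) → ℝ[X])
        * _root_.wronskian a =
      _root_.wronskian (Fin.snoc a h₁ : Fin (K + 1) → ℝ[X])
          * derivative (_root_.wronskian (Fin.snoc a h₂ : Fin (K + 1) → ℝ[X]))
        - derivative (_root_.wronskian (Fin.snoc a h₁ : Fin (K + 1) → ℝ[X]))
          * _root_.wronskian (Fin.snoc a h₂ : Fin (K + 1) → ℝ[X]) := by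
  rw [wronskian_snoc_snoc, derivative_wronskian_snoc, derivative_wronskian_snoc, wronskian_snoc,
    wronskian_snoc]
  have := jacobi_domain (wronskianMatrix a) ha
    (fun j (k : Fin K) => derivative^[(k : ℕ)] (![h₁, h₂] j))
    (fun (i : Fin 2) k => derivative^[K + i] (a k))
    (Matrix.of fun i j : Fin 2 => derivative^[K + i] (![h₁, h₂] j))
  refine this.trans ?_
  simp only [Matrix.of_apply, Matrix.cons_val_zero, Matrix.cons_val_one, Fin.val_zero,
    Fin.val_one, add_zero]
  ring

lemma wronskian_comp_swap {m : ℕ} (f : Fin m → ℝ[X]) {i j : Fin m} (hij : i ≠ j) :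
    _root_.wronskian (f ∘ Equiv.swap i j) = - _root_.wronskian f := by
  have := Matrix.det_permute' (Equiv.swap i j) (wronskianMatrix f)
  rw [Equiv.Perm.sign_swap hij] at this
  simpa [wronskianMatrix, _root_.wronskian, Matrix.submatrix, Function.comp_def] using this

/-! ### Hermite polynomials -/

lemma derivative_hermiteP_succ (n : ℕ) :
    derivative (hermiteP (n + 1)) = C (2 * ((n : ℝ) + 1)) * hermiteP n := by
  induction n with
  | zero =>
    simp only [hermiteP, derivative_sub, derivative_mul, derivative_X, derivative_ofNat,
      derivative_one, Nat.cast_zero, zero_add, mul_one, map_ofNat, derivative_zero]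
    ring
  | succ n ih =>
    rw [hermiteP, derivative_sub, derivative_mul, ih, derivative_C_mul]
    simp only [hermiteP, Nat.cast_add, Nat.cast_one, C_mul, C_add, C_1, derivative_mul,
      derivative_X, derivative_ofNat, map_ofNat]
    ring

lemma hermiteP_ode (n : ℕ) :
    derivative (derivative (hermiteP n)) - 2 * X * derivative (hermiteP n)
      + C (2 * (n : ℝ)) * hermiteP n = 0 := by
  have h := derivative_hermiteP_succ n
  rw [hermiteP, derivative_sub, derivative_mul, derivative_mul, derivative_X,
    derivative_ofNat] at h
  simp only [C_mul, C_add, C_1, map_ofNat] at h ⊢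
  linear_combination -h

lemma hermiteP_degree (n : ℕ) : (hermiteP n).degree = n := by
  induction n with
  | zero => simp [hermiteP]
  | succ n ih =>
    have h2 : (2 * X * hermiteP n : ℝ[X]).degree = ((n + 1 : ℕ) : WithBot ℕ) := by
      rw [degree_mul, degree_mul, degree_X, ih, show (2 : ℝ[X]) = C 2 from (map_ofNat C 2).symm,
        degree_C (by norm_num)]
      push_cast
      rw [zero_add, add_comm]
    rw [hermiteP, degree_sub_eq_left_of_degree_lt, h2]
    rw [h2]
    refine lt_of_le_of_lt (degree_derivative_le) ?_
    rw [ih]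
    exact_mod_cast Nat.lt_succ_self n

lemma hermiteP_ne_zero (n : ℕ) : hermiteP n ≠ 0 := by
  intro h
  have := hermiteP_degree n
  rw [h, degree_zero] at this
  exact absurd this (by simp)

/-! ### The bilinear equation and the Darboux step -/

/-- The bilinear form, `D²(f·g) - 2x D(f·g) + lam f g = 0` in Hirota's notation, of the statement
that `(f/g) exp(-x²/2)` is an eigenfunction of the Schrödinger operator with potential
`x² - 2 (log g)''`; `lam` is the eigenvalue up to a shift. -/
def Hirota (f g : ℝ[X]) (lam : ℝ) : Prop :=
  derivative (derivative f) * g - 2 * derivative f * derivative g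
    + f * derivative (derivative g) - 2 * X * (derivative f * g - f * derivative g)
    + C lam * (f * g) = 0

lemma Hirota.deriv {f g : ℝ[X]} {lam : ℝ} (h : Hirota f g lam) :
    derivative (derivative (derivative f)) * g - derivative (derivative f) * derivative g
      - derivative f * derivative (derivative g) + f * derivative (derivative (derivative g))
      - 2 * (derivative f * g - f * derivative g)
      - 2 * X * (derivative (derivative f) * g - f * derivative (derivative g))
      + C lam * (derivative f * g + f * derivative g) = 0 := by
  have hder := congrArg derivative h
  simp only [derivative_add, derivative_sub, derivative_mul, derivative_X, derivative_ofNat,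
    derivative_C, derivative_zero] at hder
  linear_combination hder

/-- The Darboux transformation as an identity between the jets of `g = W[a]`, `p = W[a,s]`,
`q = W[a,t]` and `r = W[a,s,t]`. -/
lemma darboux_field {F : Type*} [Field F]
    (x lam mu g g1 g2 g3 p p1 p2 p3 q q1 q2 q3 r r1 r2 : F) (hg : g ≠ 0)
    (E0 : r * g = p * q1 - p1 * q)
    (E1 : r1 * g + r * g1 = p * q2 - p2 * q)
    (E2 : r2 * g + 2 * r1 * g1 + r * g2 = p * q3 + p1 * q2 - p2 * q1 - p3 * q)
    (hp : p2 * g - 2 * p1 * g1 + p * g2 - 2 * x * (p1 * g - p * g1) + lam * (p * g) = 0)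
    (hp' : p3 * g - p2 * g1 - p1 * g2 + p * g3 - 2 * (p1 * g - p * g1)
      - 2 * x * (p2 * g - p * g2) + lam * (p1 * g + p * g1) = 0)
    (hq : q2 * g - 2 * q1 * g1 + q * g2 - 2 * x * (q1 * g - q * g1) + mu * (q * g) = 0)
    (hq' : q3 * g - q2 * g1 - q1 * g2 + q * g3 - 2 * (q1 * g - q * g1)
      - 2 * x * (q2 * g - q * g2) + mu * (q1 * g + q * g1) = 0) :
    r2 * p - 2 * r1 * p1 + r * p2 - 2 * x * (r1 * p - r * p1) + (mu - 2) * (r * p) = 0 := by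
  have hp2 : p2 = (2 * p1 * g1 - p * g2 + 2 * x * (p1 * g - p * g1) - lam * (p * g)) / g := by
    rw [eq_div_iff hg]; linear_combination hp
  have hq2 : q2 = (2 * q1 * g1 - q * g2 + 2 * x * (q1 * g - q * g1) - mu * (q * g)) / g := by
    rw [eq_div_iff hg]; linear_combination hq
  have hp3 : p3 = (p2 * g1 + p1 * g2 - p * g3 + 2 * (p1 * g - p * g1)
      + 2 * x * (p2 * g - p * g2) - lam * (p1 * g + p * g1)) / g := by
    rw [eq_div_iff hg]; linear_combination hp'
  have hq3 : q3 = (q2 * g1 + q1 * g2 - q * g3 + 2 * (q1 * g - q * g1)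
      + 2 * x * (q2 * g - q * g2) - mu * (q1 * g + q * g1)) / g := by
    rw [eq_div_iff hg]; linear_combination hq'
  have hr : r = (p * q1 - p1 * q) / g := by
    rw [eq_div_iff hg]; linear_combination E0
  have hr1 : r1 = (p * q2 - p2 * q - r * g1) / g := by
    rw [eq_div_iff hg]; linear_combination E1
  have hr2 : r2 = (p * q3 + p1 * q2 - p2 * q1 - p3 * q - 2 * r1 * g1 - r * g2) / g := by
    rw [eq_div_iff hg]; linear_combination E2
  rw [hr2, hr1, hr, hp3, hq3, hp2, hq2]
  field_simp
  ring

lemma darboux_domain {R : Type*} [CommRing R] [IsDomain R]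
    (x lam mu g g1 g2 g3 p p1 p2 p3 q q1 q2 q3 r r1 r2 : R) (hg : g ≠ 0)
    (E0 : r * g = p * q1 - p1 * q)
    (E1 : r1 * g + r * g1 = p * q2 - p2 * q)
    (E2 : r2 * g + 2 * r1 * g1 + r * g2 = p * q3 + p1 * q2 - p2 * q1 - p3 * q)
    (hp : p2 * g - 2 * p1 * g1 + p * g2 - 2 * x * (p1 * g - p * g1) + lam * (p * g) = 0)
    (hp' : p3 * g - p2 * g1 - p1 * g2 + p * g3 - 2 * (p1 * g - p * g1)
      - 2 * x * (p2 * g - p * g2) + lam * (p1 * g + p * g1) = 0)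
    (hq : q2 * g - 2 * q1 * g1 + q * g2 - 2 * x * (q1 * g - q * g1) + mu * (q * g) = 0)
    (hq' : q3 * g - q2 * g1 - q1 * g2 + q * g3 - 2 * (q1 * g - q * g1)
      - 2 * x * (q2 * g - q * g2) + mu * (q1 * g + q * g1) = 0) :
    r2 * p - 2 * r1 * p1 + r * p2 - 2 * x * (r1 * p - r * p1) + (mu - 2) * (r * p) = 0 := by
  let φ := algebraMap R (FractionRing R)
  have hφ : Function.Injective φ := IsFractionRing.injective R (FractionRing R)
  have hg' : φ g ≠ 0 := fun h => hg (hφ (by rw [h, map_zero]))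
  apply_fun φ at E0 E1 E2 hp hp' hq hq'
  apply hφ
  simp only [map_mul, map_sub, map_add, map_ofNat, map_zero] at E0 E1 E2 hp hp' hq hq' ⊢
  exact darboux_field _ _ _ _ _ _ _ _ _ _ _ _ _ _ _ _ _ _ hg' E0 E1 E2 hp hp' hq hq'

lemma Hirota.darboux {g p q r : ℝ[X]} {lam mu : ℝ} (hg : g ≠ 0)
    (hr : r * g = p * derivative q - derivative p * q)
    (hp : Hirota p g lam) (hq : Hirota q g mu) : Hirota r p (mu - 2) := by
  have hr1 := congrArg derivative hr
  have hr2 := congrArg derivative hr1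
  simp only [derivative_mul, derivative_sub, derivative_add] at hr1 hr2
  unfold Hirota
  rw [C_sub, show (C (2 : ℝ) : ℝ[X]) = 2 from map_ofNat C 2]
  refine darboux_domain X (C lam) (C mu) g _ _ _ p _ _ _ q _ _ _ r _ _ hg hr ?_ ?_
    hp hp.deriv hq hq.deriv
  · linear_combination hr1
  · linear_combination hr2

lemma natDegree_wronskian_two {p q : ℝ[X]} (hp : p ≠ 0) (hq : q ≠ 0)
    (hne : p.natDegree ≠ q.natDegree) :
    p * derivative q - derivative p * q ≠ 0 ∧
      (p * derivative q - derivative p * q).natDegree + 1 = p.natDegree + q.natDegree := by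
  have hX : ∀ u : ℝ[X], (X * derivative u).natDegree ≤ u.natDegree := by
    intro u
    rcases Nat.eq_zero_or_pos u.natDegree with h | h
    · rw [eq_C_of_natDegree_eq_zero h]; simp
    · refine natDegree_mul_le.trans ?_
      rw [natDegree_X]
      have := natDegree_derivative_le u
      omega
  have hXc : ∀ u : ℝ[X], (X * derivative u).coeff u.natDegree = u.natDegree * u.leadingCoeff := by
    intro u
    rcases h : u.natDegree with _ | n
    · simp
    · rw [coeff_X_mul, coeff_derivative, leadingCoeff, h]
      push_cast
      ring
  have hc : (X * (p * derivative q - derivative p * q)).coeff (p.natDegree + q.natDegree)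
      = ((q.natDegree : ℝ) - p.natDegree) * (p.leadingCoeff * q.leadingCoeff) := by
    rw [show X * (p * derivative q - derivative p * q)
        = p * (X * derivative q) - (X * derivative p) * q by ring, coeff_sub,
      coeff_mul_add_eq_of_natDegree_le le_rfl (hX q),
      coeff_mul_add_eq_of_natDegree_le (hX p) le_rfl, hXc, hXc]
    simp only [leadingCoeff]
    ring
  have hc0 : (X * (p * derivative q - derivative p * q)).coeff (p.natDegree + q.natDegree) ≠ 0 := by
    rw [hc]
    refine mul_ne_zero (sub_ne_zero.mpr fun h => hne ?_)
      (mul_ne_zero (leadingCoeff_ne_zero.mpr hp) (leadingCoeff_ne_zero.mpr hq))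
    exact_mod_cast h.symm
  have h0 : p * derivative q - derivative p * q ≠ 0 := by
    intro h
    rw [h] at hc0
    simp at hc0
  refine ⟨h0, ?_⟩
  rw [← natDegree_X_mul h0]
  refine natDegree_eq_of_le_of_coeff_ne_zero ?_ hc0
  rw [show X * (p * derivative q - derivative p * q)
        = p * (X * derivative q) - (X * derivative p) * q by ring]
  refine (natDegree_sub_le _ _).trans (max_le ?_ ?_)
  · exact natDegree_mul_le.trans (Nat.add_le_add_left (hX q) _)
  · exact natDegree_mul_le.trans (Nat.add_le_add_right (hX p) _)

lemma XiHermite_snoc {K : ℕ} (b : Fin K → ℕ) (s : ℕ) :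
    XiHermite (Fin.snoc b s : Fin (K + 1) → ℕ) = KAHermite b s := by
  unfold XiHermite KAHermite
  congr 1
  exact Fin.comp_snoc hermiteP b s

lemma KAHermite_jacobi {K : ℕ} (b : Fin K → ℕ) (hb : XiHermite b ≠ 0) (s t : ℕ) :
    KAHermite (Fin.snoc b s : Fin (K + 1) → ℕ) t * XiHermite b =
      KAHermite b s * derivative (KAHermite b t) - derivative (KAHermite b s) * KAHermite b t := by
  have h := wronskian_jacobi (fun k => hermiteP (b k)) hb (hermiteP s) (hermiteP t)
  have e : (fun k => hermiteP ((Fin.snoc b s : Fin (K + 1) → ℕ) k)) =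
      (Fin.snoc (fun k => hermiteP (b k)) (hermiteP s) : Fin (K + 1) → ℝ[X]) :=
    Fin.comp_snoc hermiteP b s
  unfold KAHermite
  rw [e]
  exact h

/-- Crum's theorem in the form needed: by induction on the number of seed polynomials, where
`W[a,s,t]` is obtained from `W[a]`, `W[a,s]` and `W[a,t]` by a Darboux step. -/
lemma KAHermite_props (K : ℕ) : ∀ a : Fin K → ℕ, Function.Injective a →
    XiHermite a ≠ 0 ∧ ∀ t, (∀ k, t ≠ a k) → KAHermite a t ≠ 0 ∧
      Hirota (KAHermite a t) (XiHermite a) (2 * ((t : ℝ) - K)) ∧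
      (KAHermite a t).natDegree + K = (XiHermite a).natDegree + t := by
  induction K with
  | zero =>
    intro a _
    have hx : XiHermite a = 1 := by simp [XiHermite, _root_.wronskian]
    refine ⟨by simp [hx], fun t _ => ?_⟩
    have hk : KAHermite a t = hermiteP t := by
      simp [KAHermite, _root_.wronskian, Fin.snoc]
    rw [hx, hk]
    refine ⟨hermiteP_ne_zero t, ?_, ?_⟩
    · have := hermiteP_ode t
      unfold Hirota
      simp only [Nat.cast_zero, sub_zero, derivative_one, mul_one, mul_zero, derivative_zero,
        add_zero]
      linear_combination this
    · simp [natDegree_eq_of_degree_eq_some (hermiteP_degree t)]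
  | succ K ih =>
    intro a ha
    obtain ⟨b, s, rfl⟩ : ∃ (b : Fin K → ℕ) (s : ℕ), a = Fin.snoc b s :=
      ⟨Fin.init a, a (Fin.last K), (Fin.snoc_init_self a).symm⟩
    obtain ⟨hb, hs⟩ := Fin.snoc_injective_iff.mp ha
    obtain ⟨hX, hall⟩ := ih b hb
    obtain ⟨hs0, hsH, hsd⟩ := hall s fun k h => hs ⟨k, h.symm⟩
    rw [XiHermite_snoc]
    refine ⟨hs0, fun t ht => ?_⟩
    have hts : t ≠ s := by simpa using ht (Fin.last K)
    obtain ⟨ht0, htH, htd⟩ := hall t fun k => by simpa using ht k.castSucc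
    have hJ := KAHermite_jacobi b hX s t
    obtain ⟨hw0, hwd⟩ := natDegree_wronskian_two hs0 ht0 (by omega)
    rw [← hJ] at hw0 hwd
    have hr0 := left_ne_zero_of_mul hw0
    refine ⟨hr0, ?_, ?_⟩
    · have := Hirota.darboux hX hJ hsH htH
      convert this using 1
      push_cast
      ring
    · rw [natDegree_mul hr0 hX] at hwd
      omega

/-! ### Residues of a quotient of two Wronskians -/

/-- The relation between `P = W[b,s]` and `Q = W[b,t]`: the derivative of `Q/P` is the
product of two eigenfunctions `(f/P) exp(-x²/2)` and `(g/P) exp(x²/2)` of the Schrödinger operator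
with potential `x² - 2 (log P)''`. The number `sg` is the sum of their eigenvalues up to a shift. -/
def Replacement (P Q : ℝ[X]) (sg : ℝ) : Prop :=
  ∃ (f g : ℝ[X]) (lam mu : ℝ), lam + mu = sg ∧
    f * g = P * derivative Q - derivative P * Q ∧ Hirota P g lam ∧ Hirota f P mu

lemma Replacement.neg {P Q : ℝ[X]} {sg : ℝ} (h : Replacement P Q sg) :
    Replacement (-P) (-Q) sg := by
  obtain ⟨f, g, lam, mu, hs, hfg, h1, h2⟩ := h
  refine ⟨f, g, lam, mu, hs, ?_, ?_, ?_⟩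
  · simp only [derivative_neg]
    linear_combination hfg
  · unfold Hirota at h1 ⊢
    simp only [derivative_neg]
    linear_combination -h1
  · unfold Hirota at h2 ⊢
    simp only [derivative_neg]
    linear_combination -h2

lemma replacement_KAHermite {K : ℕ} (b : Fin K → ℕ) (hb : Function.Injective b) {s t : ℕ}
    (hs : ∀ k, s ≠ b k) (ht : ∀ k, t ≠ b k) (hst : t < s) :
    Replacement (KAHermite b s) (KAHermite b t) (2 * ((s : ℝ) + t) - 4 * K - 2) ∧
      (KAHermite b t).natDegree < (KAHermite b s).natDegree := by
  obtain ⟨hX, hall⟩ := KAHermite_props K b hb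
  obtain ⟨-, hsH, hsd⟩ := hall s hs
  obtain ⟨-, htH, htd⟩ := hall t ht
  have hJ := KAHermite_jacobi b hX s t
  refine ⟨⟨_, _, _, _, ?_, hJ, hsH, Hirota.darboux hX hJ hsH htH⟩, by omega⟩
  ring

/-- At a simple zero `x` of `P`, with jets `P = 0, P1, P2, P3`, the eigenvalue equations fix the
expansions of the two eigenfunctions through second order, and hence that of `(Q/P)'`; only the
sum of the two eigenvalues enters. -/
lemma local_jet {F : Type*} [Field F] [CharZero F]
    (x lam mu P1 P2 P3 Q0 Q1 Q2 f f1 f2 g g1 g2 : F) (hP : P1 ≠ 0)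
    (N0 : f * g = - P1 * Q0)
    (N2 : f2 * g + 2 * f1 * g1 + f * g2 = P1 * Q2 - P2 * Q1 - P3 * Q0)
    (hg : P2 * g - 2 * P1 * g1 - 2 * x * (P1 * g) = 0)
    (hg' : P3 * g - P2 * g1 - P1 * g2 - 2 * (P1 * g) - 2 * x * (P2 * g) + lam * (P1 * g) = 0)
    (hf : f * P2 - 2 * f1 * P1 + 2 * x * (f * P1) = 0)
    (hf' : f * P3 - f2 * P1 - f1 * P2 + 2 * (f * P1) + 2 * x * (f * P2) + mu * (f * P1) = 0) :
    P1 * Q2 - P2 * Q1 =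
      Q0 * (-P3 + P2 ^ 2 / (2 * P1) + 2 * x ^ 2 * P1 - (lam + mu) * P1) := by
  have hg1 : g1 = g * (P2 / (2 * P1) - x) := by
    field_simp
    linear_combination -hg
  have hf1 : f1 = f * (P2 / (2 * P1) + x) := by
    field_simp
    linear_combination -hf
  have hg2 : g2 = g * (P3 / P1 - P2 / P1 * (P2 / (2 * P1) - x) - 2 - 2 * x * P2 / P1 + lam) := by
    rw [hg1] at hg'
    field_simp
    field_simp at hg'
    linear_combination -hg'
  have hf2 : f2 = f * (P3 / P1 - P2 / P1 * (P2 / (2 * P1) + x) + 2 + 2 * x * P2 / P1 + mu) := by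
    rw [hf1] at hf'
    field_simp
    field_simp at hf'
    linear_combination -hf'
  have hsum : f2 * g + 2 * f1 * g1 + f * g2 =
      (f * g) * (2 * P3 / P1 - P2 ^ 2 / (2 * P1 ^ 2) - 2 * x ^ 2 + (lam + mu)) := by
    rw [hg1, hf1, hg2, hf2]
    field_simp
    ring
  rw [hsum, N0] at N2
  field_simp at N2 ⊢
  linear_combination -N2

lemma Replacement.at_zero {P Q : ℝ[X]} {sg : ℝ} (h : Replacement P Q sg) (x : ℂ)
    (h0 : aeval x P = 0) (h1 : aeval x (derivative P) ≠ 0) :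
    aeval x (derivative P) * aeval x (derivative (derivative Q))
        - aeval x (derivative (derivative P)) * aeval x (derivative Q) =
      aeval x Q * (- aeval x (derivative (derivative (derivative P)))
        + aeval x (derivative (derivative P)) ^ 2 / (2 * aeval x (derivative P))
        + 2 * x ^ 2 * aeval x (derivative P) - sg * aeval x (derivative P)) := by
  obtain ⟨f, g, lam, mu, hs, hN, hP, hf⟩ := h
  have hN1 := congrArg derivative hN
  have hN2 := congrArg derivative hN1
  have hP' := hP.deriv
  have hf' := hf.deriv
  unfold Hirota at hP hf
  simp only [derivative_mul, derivative_sub, derivative_add] at hN2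
  apply_fun aeval x at hN hN2 hP hP' hf hf'
  simp only [map_mul, map_sub, map_add, map_ofNat, map_zero, aeval_X, aeval_C, h0]
    at hN hN2 hP hP' hf hf'
  rw [← hs]
  push_cast
  refine local_jet x lam mu _ _ _ _ _ _ (aeval x f) (aeval x (derivative f))
    (aeval x (derivative (derivative f))) (aeval x g) (aeval x (derivative g))
    (aeval x (derivative (derivative g))) h1 ?_ ?_ ?_ ?_ ?_ ?_
  · linear_combination hN
  · linear_combination hN2
  · linear_combination hP
  · simp only [Complex.coe_algebraMap] at hP'
    linear_combination hP'
  · linear_combination hf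
  · simp only [Complex.coe_algebraMap] at hf'
    linear_combination hf'

/-- Partial fractions of `Q/P` at simple zeros `η`: comparison of the second-order jets at `η l`.
The summand `k = l` on the right vanishes, since division by zero gives zero. -/
lemma partial_fractions {n : ℕ} (P Q : ℂ[X]) (hPd : P.natDegree = n) (hP0 : P ≠ 0)
    (hQd : Q.natDegree < n) (η : Fin n → ℂ) (hη : Function.Injective η)
    (hz : ∀ l, P.eval (η l) = 0) :
    (∀ l, (derivative P).eval (η l) ≠ 0) ∧
    ∀ l, (derivative P).eval (η l) * (derivative (derivative Q)).eval (η l)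
        - (derivative (derivative P)).eval (η l) * (derivative Q).eval (η l) =
      Q.eval (η l) / (derivative P).eval (η l) *
        ((derivative P).eval (η l) * (derivative (derivative (derivative P))).eval (η l) / 3
          - (derivative (derivative P)).eval (η l) ^ 2 / 2)
      - 2 * (derivative P).eval (η l) ^ 2 *
        ∑ k, Q.eval (η k) / (derivative P).eval (η k) / (η l - η k) ^ 2 := by
  let h : Fin n → ℂ[X] := fun k => P /ₘ (X - C (η k))
  have hh : ∀ k, (X - C (η k)) * h k = P := fun k => mul_divByMonic_eq_iff_isRoot.mpr (hz k)
  have hh1 : ∀ k, h k + (X - C (η k)) * derivative (h k) = derivative P := by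
    intro k
    rw [← congrArg derivative (hh k)]
    simp only [derivative_mul, derivative_sub, derivative_X, derivative_C]
    ring
  have hh2 : ∀ k, 2 * derivative (h k) + (X - C (η k)) * derivative (derivative (h k))
      = derivative (derivative P) := by
    intro k
    rw [← congrArg derivative (hh1 k)]
    simp only [derivative_mul, derivative_sub, derivative_add, derivative_X, derivative_C]
    ring
  have hh3 : ∀ k, 3 * derivative (derivative (h k))
      + (X - C (η k)) * derivative (derivative (derivative (h k)))
      = derivative (derivative (derivative P)) := by
    intro k
    rw [← congrArg derivative (hh2 k)]
    simp only [derivative_mul, derivative_sub, derivative_add, derivative_X, derivative_C,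
      derivative_ofNat]
    ring
  have hself : ∀ k, (h k).eval (η k) = (derivative P).eval (η k) := by
    intro k
    rw [← hh1 k]
    simp
  have hother : ∀ k l, l ≠ k → (h k).eval (η l) = 0 := by
    intro k l hlk
    have := hz l
    rw [← hh k, eval_mul] at this
    refine (mul_eq_zero.mp this).resolve_left ?_
    simpa [sub_eq_zero] using hη.ne hlk
  have hdeg : ∀ k, (h k).natDegree < n := by
    intro k
    have hk := hh k
    have hk0 : h k ≠ 0 := by
      rintro h0
      rw [h0, mul_zero] at hk
      exact hP0 hk.symm
    have := congrArg natDegree hk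
    rw [natDegree_mul (X_sub_C_ne_zero _) hk0, natDegree_X_sub_C, hPd] at this
    omega
  have hsimple : ∀ l, (derivative P).eval (η l) ≠ 0 := by
    -- a double zero would give `h l`, of degree less than `n`, all `n` zeros
    intro l hl
    have : h l = 0 := by
      refine eq_zero_of_natDegree_lt_card_of_eval_eq_zero (h l) hη (fun i => ?_)
        (by simpa using hdeg l)
      rcases eq_or_ne i l with rfl | hi
      · rw [hself, hl]
      · exact hother l i hi
    have hl' := hh l
    rw [this, mul_zero] at hl'
    exact hP0 hl'.symm
  refine ⟨hsimple, fun l => ?_⟩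
  set r : Fin n → ℂ := fun k => Q.eval (η k) / (derivative P).eval (η k) with hr
  have hQ : Q = ∑ k, C (r k) * h k := by
    rw [← sub_eq_zero]
    refine eq_zero_of_natDegree_lt_card_of_eval_eq_zero _ hη (fun i => ?_) ?_
    · rw [eval_sub, eval_finsetSum, Finset.sum_eq_single i]
      · rw [eval_mul, eval_C, hself, hr, div_mul_cancel₀ _ (hsimple i), sub_self]
      · intro k _ hk
        rw [eval_mul, hother k i hk.symm, mul_zero]
      · simp
    · rw [Fintype.card_fin]
      refine lt_of_le_of_lt (natDegree_sub_le _ _) (max_lt hQd ?_)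
      refine lt_of_le_of_lt (natDegree_sum_le_of_forall_le _ _ (n := n - 1) ?_) (by omega)
      intro k _
      have := natDegree_C_mul_le (r k) (h k)
      have := hdeg k
      omega
  have hQ1 : (derivative Q).eval (η l) = ∑ k, r k * (derivative (h k)).eval (η l) := by
    rw [hQ]
    simp [eval_finsetSum]
  have hQ2 : (derivative (derivative Q)).eval (η l)
      = ∑ k, r k * (derivative (derivative (h k))).eval (η l) := by
    rw [hQ]
    simp [eval_finsetSum]
  rw [hQ1, hQ2, Finset.mul_sum, Finset.mul_sum, Finset.mul_sum, ← Finset.sum_sub_distrib]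
  rw [← Finset.add_sum_erase _ _ (Finset.mem_univ l),
    ← Finset.add_sum_erase _ (fun k => 2 * _ * (_ / (η l - η k) ^ 2)) (Finset.mem_univ l),
    sub_self, zero_pow two_ne_zero, div_zero, mul_zero, zero_add]
  have hl2 := congrArg (eval (η l)) (hh2 l)
  have hl3 := congrArg (eval (η l)) (hh3 l)
  simp only [eval_add, eval_mul, eval_sub, eval_X, eval_C, eval_ofNat, sub_self, zero_mul,
    add_zero] at hl2 hl3
  rw [sub_eq_add_neg _ (Finset.sum _ _), ← Finset.sum_neg_distrib]
  congr 1
  · change _ = r l * _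
    linear_combination r l * (derivative P).eval (η l) / 3 * hl3
      - r l * (derivative (derivative P)).eval (η l) / 2 * hl2
  · refine Finset.sum_congr rfl fun k hk => ?_
    have hlk : l ≠ k := (Finset.ne_of_mem_erase hk).symm
    have hδ : η l - η k ≠ 0 := sub_ne_zero.mpr (hη.ne hlk)
    have hk1 := congrArg (eval (η l)) (hh1 k)
    have hk2 := congrArg (eval (η l)) (hh2 k)
    simp only [eval_add, eval_mul, eval_sub, eval_X, eval_C, eval_ofNat, hother k l hlk,
      zero_add] at hk1 hk2
    change _ = -(2 * _ * (r k / _))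
    rw [← hk2, ← hk1]
    field_simp
    ring

/-- The residues `r l = Q(η l)/P'(η l)` form an eigenvector of the matrix with off-diagonal
entries `1/(η l - η k)²` and a diagonal depending only on `P`. -/
lemma Replacement.eigen {n : ℕ} {P Q : ℝ[X]} {sg : ℝ} (h : Replacement P Q sg)
    (hPd : P.natDegree = n) (hQd : Q.natDegree < P.natDegree) (η : Fin n → ℂ)
    (hη : Function.Injective η) (hz : ∀ l, aeval (η l) P = 0) (l : Fin n) :
    ∑ k, aeval (η k) Q / aeval (η k) (derivative P) / (η l - η k) ^ 2 =
      aeval (η l) Q / aeval (η l) (derivative P) *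
        (sg / 2 + (2 * aeval (η l) (derivative (derivative (derivative P)))
            / (3 * aeval (η l) (derivative P))
          - aeval (η l) (derivative (derivative P)) ^ 2 / (2 * aeval (η l) (derivative P) ^ 2)
          - (η l) ^ 2)) := by
  have e : ∀ (u : ℝ[X]) (x : ℂ), eval x (u.map (algebraMap ℝ ℂ)) = aeval x u :=
    fun u x => eval_map_algebraMap u x
  have hP0 : P ≠ 0 := by
    rintro rfl
    simp at hQd
  obtain ⟨hs, hpf⟩ := partial_fractions (P.map (algebraMap ℝ ℂ)) (Q.map (algebraMap ℝ ℂ))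
    (by rw [natDegree_map, hPd])
    ((Polynomial.map_ne_zero_iff (algebraMap ℝ ℂ).injective).mpr hP0)
    (by rw [natDegree_map]; omega) η hη (fun l => by rw [e, hz])
  simp only [derivative_map, e] at hs hpf
  have h1 := hs l
  have hl := h.at_zero (η l) (hz l) h1
  rw [hpf l] at hl
  generalize (∑ k, aeval (η k) Q / aeval (η k) (derivative P) / (η l - η k) ^ 2) = S at hl ⊢
  field_simp at hl ⊢
  linear_combination -hl / 2

/-- Eigenvectors of a complex symmetric matrix for distinct eigenvalues are orthogonal with
respect to the bilinear dot product. -/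
lemma Replacement.orthogonal {n : ℕ} {P Q Q' : ℝ[X]} {sg sg' : ℝ} (h : Replacement P Q sg)
    (h' : Replacement P Q' sg') (hne : sg ≠ sg')
    (hPd : P.natDegree = n) (hQd : Q.natDegree < P.natDegree)
    (hQd' : Q'.natDegree < P.natDegree) (η : Fin n → ℂ)
    (hη : Function.Injective η) (hz : ∀ l, aeval (η l) P = 0) :
    ∑ l, aeval (η l) Q * aeval (η l) Q' / (aeval (η l) (derivative P)) ^ 2 = 0 := by
  have E := h.eigen hPd hQd η hη hz
  have E' := h'.eigen hPd hQd' η hη hz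
  have hsw : ∑ l, aeval (η l) Q' / aeval (η l) (derivative P) *
        ∑ k, aeval (η k) Q / aeval (η k) (derivative P) / (η l - η k) ^ 2 =
      ∑ l, aeval (η l) Q / aeval (η l) (derivative P) *
        ∑ k, aeval (η k) Q' / aeval (η k) (derivative P) / (η l - η k) ^ 2 := by
    simp only [Finset.mul_sum]
    rw [Finset.sum_comm]
    refine Finset.sum_congr rfl fun k _ => Finset.sum_congr rfl fun l _ => ?_
    rw [show (η l - η k) ^ 2 = (η k - η l) ^ 2 by ring]
    ring
  simp only [E, E'] at hsw
  rw [← sub_eq_zero, ← Finset.sum_sub_distrib] at hsw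
  have hne' : ((sg : ℂ) - sg') / 2 ≠ 0 :=
    div_ne_zero (sub_ne_zero.mpr (by exact_mod_cast hne)) two_ne_zero
  refine (mul_eq_zero.mp ?_).resolve_left hne'
  rw [Finset.mul_sum, ← hsw]
  refine Finset.sum_congr rfl fun l _ => ?_
  ring

/-! ### Moving the replaced index to the last column -/

lemma KAHermite_update_swap {M : ℕ} (d : Fin M → ℕ) (j : Fin M) (s t : ℕ) :
    KAHermite (Function.update d j s) t = - KAHermite (Function.update d j t) s := by
  have hne : j.castSucc ≠ Fin.last M := (Fin.castSucc_lt_last j).ne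
  unfold KAHermite
  rw [← wronskian_comp_swap _ hne]
  congr 1
  ext1 k
  induction k using Fin.lastCases with
  | last => simp
  | cast k =>
    rcases eq_or_ne k j with rfl | hk
    · simp
    · rw [Function.comp_apply, Equiv.swap_apply_of_ne_of_ne
        (fun h => hk (Fin.castSucc_injective M h)) (Fin.castSucc_lt_last k).ne]
      simp [hk]

/-- The extra lower degree polynomial with `d j` replaced by `ε` differs from `P_{D,N}` in the
last column only, once `N` has taken the place of `d j` in the multi-index. -/
lemma replacement_extra {M N : ℕ} (d : Fin M → ℕ) (hd : Function.Injective d)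
    (hN : ∀ k, N ≠ d k) (j : Fin M) (ε : ℕ) (hε : ε < d j) (hεD : ∀ k, ε ≠ d k) (hεN : ε ≠ N) :
    Replacement (KAHermite d N) (KAHermite (Function.update d j ε) N)
        (2 * ((d j : ℝ) + ε) - 4 * M - 2) ∧
      (KAHermite (Function.update d j ε) N).natDegree < (KAHermite d N).natDegree := by
  have hinj : Function.Injective (Function.update d j N) := by
    intro a b hab
    by_cases ha : a = j <;> by_cases hb : b = j <;> simp_all
    · exact absurd hab.symm (hN a)
    · exact hd hab
  have h1 : ∀ k, d j ≠ Function.update d j N k := by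
    intro k
    by_cases hk : k = j
    · subst hk
      simpa using (hN k).symm
    · simpa [hk] using fun h => hk (hd h).symm
  have h2 : ∀ k, ε ≠ Function.update d j N k := by
    intro k
    by_cases hk : k = j
    · subst hk
      simpa using hεN
    · simpa [hk] using hεD k
  obtain ⟨hR, hdeg⟩ := replacement_KAHermite _ hinj h1 h2 hε
  have e1 : KAHermite d N = - KAHermite (Function.update d j N) (d j) := by
    rw [← KAHermite_update_swap, Function.update_eq_self]
  rw [e1, KAHermite_update_swap d j ε N, natDegree_neg, natDegree_neg]
  exact ⟨hR.neg, hdeg⟩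

/-- Replacing an entry by `N` produces a repeated column. -/
lemma KAHermite_update_self {M : ℕ} (d : Fin M → ℕ) (j : Fin M) (N : ℕ) :
    KAHermite (Function.update d j N) N = 0 :=
  self_eq_neg.mp (KAHermite_update_swap d j N N)

/-- **Discrete orthogonality relations involving the extra lower degree Krein–Adler
Hermite polynomials** `P_{D′(j,ε),N}`, obtained by replacing the entry `d j` of the
multi-index `D` by a smaller unused index `ε`.  Part (a): orthogonality of an ordinary
lower degree polynomial `P_{D,m}` and an extra one; part (b): orthogonality of two extra
ones.  The side conditions `m + N ≠ d j + ε` resp. `d j + ε ≠ d j' + ε'` express the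
distinctness of the corresponding eigenvalues. -/
theorem discrete_orthogonality_KA_hermite_extra
    (M N : ℕ) (d : Fin M → ℕ) (hpos : ∀ k, 0 < d k) (hmono : StrictMono d)
    (hN : ∀ k, N ≠ d k)
    (Nt : ℕ) (hNt : Nt + M * (M + 1) / 2 = (∑ k, d k) + N)
    (hdeg : (KAHermite d N).natDegree = Nt)
    (η : Fin Nt → ℂ) (hη : Function.Injective η)
    (hzero : ∀ l, Polynomial.aeval (η l) (KAHermite d N) = 0)
    (hXi : ∀ l, Polynomial.aeval (η l) (XiHermite d) ≠ 0)
    (j : Fin M) (ε : ℕ) (hε : ε < d j) (hεD : ∀ k, ε ≠ d k)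
    (j' : Fin M) (ε' : ℕ) (hε' : ε' < d j') (hε'D : ∀ k, ε' ≠ d k) :
    (∀ m : ℕ, m < N → (∀ k, m ≠ d k) → m + N ≠ d j + ε →
      ∑ l, Polynomial.aeval (η l) (KAHermite d m) *
          Polynomial.aeval (η l) (KAHermite (Function.update d j ε) N) /
          (Polynomial.aeval (η l) (Polynomial.derivative (KAHermite d N))) ^ 2 = 0) ∧
    (d j + ε ≠ d j' + ε' →
      ∑ l, Polynomial.aeval (η l) (KAHermite (Function.update d j ε) N) *
          Polynomial.aeval (η l) (KAHermite (Function.update d j' ε') N) /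
          (Polynomial.aeval (η l) (Polynomial.derivative (KAHermite d N))) ^ 2 = 0) := by
  have hinj := hmono.injective
  refine ⟨fun m hm hmD hne => ?_, fun hne => ?_⟩
  · by_cases hεN : ε = N
    · simp [hεN, KAHermite_update_self]
    obtain ⟨hR, hRd⟩ := replacement_extra d hinj hN j ε hε hεD hεN
    obtain ⟨hS, hSd⟩ := replacement_KAHermite d hinj hN hmD hm
    refine hS.orthogonal hR (fun h => hne ?_) hdeg hSd hRd η hη hzero
    have : (m : ℝ) + N = d j + ε := by linarith
    exact_mod_cast this
  · by_cases hεN : ε = N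
    · simp [hεN, KAHermite_update_self]
    by_cases hεN' : ε' = N
    · simp [hεN', KAHermite_update_self]
    obtain ⟨hR, hRd⟩ := replacement_extra d hinj hN j ε hε hεD hεN
    obtain ⟨hS, hSd⟩ := replacement_extra d hinj hN j' ε' hε' hε'D hεN'
    refine hR.orthogonal hS (fun h => hne ?_) hdeg hRd hSd η hη hzero
    have : (d j : ℝ) + ε = d j' + ε' := by linarith
    exact_mod_cast this
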